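/- Let s > 0 and let n = (n₁, n₂, 0) ∈ ℝ³ be a unit vector, and set Q = s( n⊗n − (1/3)I ) ∈ 𝒯. Define N ∈ Sym₀ by N = s·[[0, 0, n₁], [0, 0, n₂], [n₁, n₂, 0]]. Then N is normal to 𝒯 at Q in the following sense: for every curve γ : (−1, 1) → Sym₀ that is differentiable at 0 with γ(0) = Q and γ(t) ∈ 𝒯 for all t ∈ (−1,1), one has ⟨γ'(0), N⟩ = 0, where ⟨·,·⟩ is the Frobenius inner product. -/

import Mathlib

/- STATEMENT 17: Let s > 0, n = (n₁,n₂,0) a unit vector, Q = s(n⊗n − (1/3)I) ∈ 𝒯, and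
N = s[[0,0,n₁],[0,0,n₂],[n₁,n₂,0]]. Then N is normal to 𝒯 at Q: for every curve
γ : (−1,1) → Sym₀ differentiable at 0 with γ(0) = Q and γ(t) ∈ 𝒯 for all t,
⟨γ'(0), N⟩ = tr(γ'(0)·N) = 0 (Frobenius inner product). -/

noncomputable section

open Matrix Set

abbrev Mat3 : Type := Matrix (Fin 3) (Fin 3) ℝ
abbrev E9 : Type := EuclideanSpace ℝ (Fin 3 × Fin 3)

def toM (A : E9) : Mat3 := Matrix.of fun i j => A (i, j)

def toE (Q : Mat3) : E9 := (WithLp.equiv 2 _).symm (fun p => Q p.1 p.2)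

def Sym0E : Set E9 := {A | (toM A).IsSymm ∧ (toM A).trace = 0}

def unitVec (n : Fin 3 → ℝ) : Prop := ∑ i, (n i) ^ 2 = 1

def uniax (s : ℝ) (n : Fin 3 → ℝ) : Mat3 :=
  s • (Matrix.vecMulVec n n - (1 / 3 : ℝ) • (1 : Mat3))

def IsEigen (Q : Mat3) (μ : ℝ) (v : Fin 3 → ℝ) : Prop := Q.mulVec v = μ • v

def MaxEigen (Q : Mat3) (lam : ℝ) (n : Fin 3 → ℝ) : Prop :=
  unitVec n ∧ IsEigen Q lam n ∧
    ∀ (μ : ℝ) (v : Fin 3 → ℝ), v ≠ 0 → IsEigen Q μ v → μ ≤ lam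

def SimpleMaxEigen (Q : Mat3) (lam : ℝ) (n : Fin 3 → ℝ) : Prop :=
  MaxEigen Q lam n ∧ ∀ v : Fin 3 → ℝ, IsEigen Q lam v → ∃ t : ℝ, v = t • n

def TsetE : Set E9 :=
  {A | A ∈ Sym0E ∧ A ≠ 0 ∧
    ∃ (lam : ℝ) (n : Fin 3 → ℝ), SimpleMaxEigen (toM A) lam n ∧ n 2 = 0}

/-!
If `Q` is symmetric, `A m = μ m` and `m ⟂ (lam - Q) u`, then `u · (A - Q) m = (μ - lam) (u · m)`.
Let `A` run along a curve through `Q`, with top eigenvectors `m ⟂ (lam - Q) u`, and let `n` be the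
top eigenvector of `Q`, with eigenvalue `lam`. The identity holds for `u` and, trivially, for `n` in
place of `u`; eliminating the unknown `μ - lam` gives
`(u · (A - Q) m) (n · m) = (n · (A - Q) m) (u · m)`.
Divide by the increment of the curve parameter. By compactness the unit vectors `m` accumulate at a
top eigenvector of `Q`, that is at `± n`, so the derivative `D` satisfies
`u · D n = (n · D n) (u · n)`, which vanishes when `u ⟂ n`. For the uniaxial `Q` one has
`(lam - Q) e₃ = s e₃`, so `u = e₃` is admissible, and `N = s (n ⊗ e₃ + e₃ ⊗ n)`.
-/

open Filter Topology

section TendstoMatrix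

variable {ι α R : Type*} [Fintype ι] [TopologicalSpace R] [NonUnitalNonAssocSemiring R]
  [ContinuousAdd R] [ContinuousMul R] {l : Filter α}

lemma tendsto_dotProduct {x y : α → ι → R} {a b : ι → R}
    (hx : Tendsto x l (𝓝 a)) (hy : Tendsto y l (𝓝 b)) :
    Tendsto (fun t => x t ⬝ᵥ y t) l (𝓝 (a ⬝ᵥ b)) :=
  ((continuous_fst.dotProduct continuous_snd).tendsto (a, b)).comp (hx.prodMk_nhds hy)

lemma tendsto_mulVec {κ : Type*} {B : α → Matrix κ ι R} {Q : Matrix κ ι R}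
    {x : α → ι → R} {a : ι → R} (hB : Tendsto B l (𝓝 Q)) (hx : Tendsto x l (𝓝 a)) :
    Tendsto (fun t => B t *ᵥ x t) l (𝓝 (Q *ᵥ a)) :=
  ((continuous_fst.matrix_mulVec continuous_snd).tendsto (Q, a)).comp (hB.prodMk_nhds hx)

end TendstoMatrix

section TopEigenpair

variable {ι : Type*} [Fintype ι]

/-- `v` is a unit eigenvector of the real symmetric matrix `A` for its largest eigenvalue `lam`.
Maximality is encoded variationally, by the bound `lam` on the quadratic form of `A`, which
makes the notion visibly closed under limits. -/
structure IsTopUnitEigenpair (A : Matrix ι ι ℝ) (lam : ℝ) (v : ι → ℝ) : Prop where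
  isSymm : A.IsSymm
  dotProduct_self : v ⬝ᵥ v = 1
  mulVec_eq : A *ᵥ v = lam • v
  dotProduct_mulVec_le : ∀ x, x ⬝ᵥ A *ᵥ x ≤ lam * (x ⬝ᵥ x)

lemma IsTopUnitEigenpair.eigenvalue_eq {A : Matrix ι ι ℝ} {lam : ℝ} {v : ι → ℝ}
    (h : IsTopUnitEigenpair A lam v) : lam = v ⬝ᵥ A *ᵥ v := by
  rw [h.mulVec_eq, dotProduct_smul, h.dotProduct_self, smul_eq_mul, mul_one]

lemma IsTopUnitEigenpair.eigenvalue_le {A : Matrix ι ι ℝ} {lam ν : ℝ} {v w : ι → ℝ}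
    (hv : IsTopUnitEigenpair A lam v) (hw : IsTopUnitEigenpair A ν w) : lam ≤ ν := by
  simpa only [← hv.eigenvalue_eq, hv.dotProduct_self, mul_one] using hw.dotProduct_mulVec_le v

lemma IsTopUnitEigenpair.eigenvalue_unique {A : Matrix ι ι ℝ} {lam ν : ℝ} {v w : ι → ℝ}
    (hv : IsTopUnitEigenpair A lam v) (hw : IsTopUnitEigenpair A ν w) : lam = ν :=
  le_antisymm (hv.eigenvalue_le hw) (hw.eigenvalue_le hv)

lemma posSemidef_smul_one_sub_of_eigenvalues_le [DecidableEq ι] {A : Matrix ι ι ℝ}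
    (hA : A.IsHermitian) {lam : ℝ}
    (hle : ∀ (μ : ℝ) (v : ι → ℝ), v ≠ 0 → A *ᵥ v = μ • v → μ ≤ lam) :
    (lam • (1 : Matrix ι ι ℝ) - A).PosSemidef := by
  have hH : (lam • (1 : Matrix ι ι ℝ) - A).IsHermitian :=
    (IsSelfAdjoint.smul (.all lam) (.one _)).sub hA
  refine hH.posSemidef_iff_eigenvalues_nonneg.2 fun i => ?_
  have hne : (hH.eigenvectorBasis i).ofLp ≠ 0 := fun h =>
    hH.eigenvectorBasis.orthonormal.ne_zero i (WithLp.ofLp_injective 2 h)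
  have heigen := hH.mulVec_eigenvectorBasis i
  rw [sub_mulVec, smul_mulVec, one_mulVec] at heigen
  have hμ := hle (lam - hH.eigenvalues i) _ hne (by rw [sub_smul, ← heigen, sub_sub_cancel])
  exact sub_le_self_iff lam |>.1 hμ

lemma dotProduct_mulVec_le_of_eigenvalues_le {A : Matrix ι ι ℝ} (hA : A.IsSymm) {lam : ℝ}
    (hle : ∀ (μ : ℝ) (v : ι → ℝ), v ≠ 0 → A *ᵥ v = μ • v → μ ≤ lam) (x : ι → ℝ) :
    x ⬝ᵥ A *ᵥ x ≤ lam * (x ⬝ᵥ x) := by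
  classical
  have hpos := (posSemidef_smul_one_sub_of_eigenvalues_le
    (isHermitian_iff_isSymm.2 hA) hle).dotProduct_mulVec_nonneg x
  simpa only [star_trivial, sub_mulVec, smul_mulVec, one_mulVec, dotProduct_sub, dotProduct_smul,
    smul_eq_mul, sub_nonneg] using hpos

lemma isCompact_setOf_dotProduct_self_eq_one : IsCompact {v : ι → ℝ | v ⬝ᵥ v = 1} := by
  refine Metric.isCompact_of_isClosed_isBounded
    (isClosed_eq (by fun_prop) continuous_const)
    ((Metric.isBounded_closedBall (x := 0) (r := 1)).subset fun v hv => ?_)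
  rw [mem_closedBall_zero_iff, pi_norm_le_iff_of_nonneg zero_le_one]
  intro i
  have hsq : v i * v i ≤ 1 := (Finset.single_le_sum (f := fun j => v j * v j)
    (fun j _ => mul_self_nonneg (v j)) (Finset.mem_univ i)).trans_eq hv
  exact abs_le_one_iff_mul_self_le_one.2 hsq

variable {α : Type*} {l : Filter α} {B : α → Matrix ι ι ℝ} {Q : Matrix ι ι ℝ}

lemma IsTopUnitEigenpair.of_tendsto [l.NeBot] {μ : α → ℝ} {m : α → ι → ℝ} {v : ι → ℝ}
    (hB : Tendsto B l (𝓝 Q)) (hm : Tendsto m l (𝓝 v))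
    (h : ∀ᶠ t in l, IsTopUnitEigenpair (B t) (μ t) (m t)) :
    IsTopUnitEigenpair Q (v ⬝ᵥ Q *ᵥ v) v := by
  have hμ : Tendsto μ l (𝓝 (v ⬝ᵥ Q *ᵥ v)) :=
    (tendsto_dotProduct hm (tendsto_mulVec hB hm)).congr' (h.mono fun t ht => ht.eigenvalue_eq.symm)
  refine ⟨?_, ?_, ?_, fun x => ?_⟩
  · exact tendsto_nhds_unique_of_eventuallyEq
      ((continuous_id.matrix_transpose.tendsto Q).comp hB) hB (h.mono fun t ht => ht.isSymm)
  · exact tendsto_nhds_unique_of_eventuallyEq (tendsto_dotProduct hm hm) tendsto_const_nhds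
      (h.mono fun t ht => ht.dotProduct_self)
  · exact tendsto_nhds_unique_of_eventuallyEq (tendsto_mulVec hB hm) (hμ.smul hm)
      (h.mono fun t ht => ht.mulVec_eq)
  · exact le_of_tendsto_of_tendsto
      (tendsto_dotProduct tendsto_const_nhds (tendsto_mulVec hB tendsto_const_nhds))
      (hμ.mul tendsto_const_nhds) (h.mono fun t ht => ht.dotProduct_mulVec_le x)

lemma exists_ultrafilter_tendsto_isTopUnitEigenpair {P : (ι → ℝ) → Prop}
    (hB : Tendsto B l (𝓝 Q)) (h : ∃ᶠ t in l, ∃ ν v, IsTopUnitEigenpair (B t) ν v ∧ P v) :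
    ∃ f : Ultrafilter α, ↑f ≤ l ∧ ∃ (μ : α → ℝ) (m : α → ι → ℝ) (v : ι → ℝ),
      (∀ᶠ t in f, IsTopUnitEigenpair (B t) (μ t) (m t) ∧ P (m t)) ∧
        Tendsto m f (𝓝 v) ∧ IsTopUnitEigenpair Q (v ⬝ᵥ Q *ᵥ v) v := by
  have : (l ⊓ 𝓟 {t | ∃ ν v, IsTopUnitEigenpair (B t) ν v ∧ P v}).NeBot :=
    frequently_mem_iff_neBot.1 h
  obtain ⟨f, hf⟩ := Ultrafilter.exists_le (l ⊓ 𝓟 {t | ∃ ν v, IsTopUnitEigenpair (B t) ν v ∧ P v})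
  have hfl : ↑f ≤ l := hf.trans inf_le_left
  obtain ⟨μ, hμ⟩ := skolem.1 (le_principal_iff.1 (hf.trans inf_le_right))
  obtain ⟨m, hm⟩ := skolem.1 hμ
  have htop : ∀ᶠ t in f, IsTopUnitEigenpair (B t) (μ t) (m t) := hm.mono fun _ h => h.1
  obtain ⟨v, -, hv⟩ := isCompact_setOf_dotProduct_self_eq_one.ultrafilter_le_nhds (f.map m)
    (le_principal_iff.2 (htop.mono fun t ht => ht.dotProduct_self))
  exact ⟨f, hfl, μ, m, v, hm, hv, .of_tendsto (hB.mono_left hfl) hv htop⟩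

end TopEigenpair

section Perturbation

variable {ι : Type*} [Fintype ι]

lemma dotProduct_sub_mulVec_eq_of_eigenvector {R : Type*} [CommRing R] {A Q : Matrix ι ι R}
    {lam μ : R} {m u : ι → R} (hQ : Q.IsSymm) (hm : A *ᵥ m = μ • m)
    (horth : m ⬝ᵥ (lam • u - Q *ᵥ u) = 0) :
    u ⬝ᵥ (A - Q) *ᵥ m = (μ - lam) * (u ⬝ᵥ m) := by
  have hQu : u ⬝ᵥ Q *ᵥ m = lam * (u ⬝ᵥ m) := by
    rw [dotProduct_sub, dotProduct_smul, sub_eq_zero, smul_eq_mul] at horth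
    rw [dotProduct_mulVec, ← mulVec_transpose, hQ.eq, dotProduct_comm, ← horth,
      dotProduct_comm m u]
  rw [sub_mulVec, dotProduct_sub, hm, dotProduct_smul, smul_eq_mul, hQu, sub_mul]

lemma dotProduct_smul_sub_mulVec_mul_comm {R : Type*} [CommRing R] {A Q : Matrix ι ι R}
    {lam μ : R} {m n u : ι → R} (c : R) (hQ : Q.IsSymm) (hn : Q *ᵥ n = lam • n)
    (hm : A *ᵥ m = μ • m) (horth : m ⬝ᵥ (lam • u - Q *ᵥ u) = 0) :
    (u ⬝ᵥ (c • (A - Q)) *ᵥ m) * (n ⬝ᵥ m) = (n ⬝ᵥ (c • (A - Q)) *ᵥ m) * (u ⬝ᵥ m) := by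
  have hu := dotProduct_sub_mulVec_eq_of_eigenvector hQ hm horth
  have hn' := dotProduct_sub_mulVec_eq_of_eigenvector (u := n) (lam := lam) hQ hm
    (by rw [hn, sub_self, dotProduct_zero])
  simp only [smul_mulVec, dotProduct_smul, smul_eq_mul, hu, hn']
  ring

lemma trace_mul_vecMulVec_add_vecMulVec {R : Type*} [CommRing R] {D : Matrix ι ι R}
    (hD : D.IsSymm) (n u : ι → R) :
    (D * (vecMulVec n u + vecMulVec u n)).trace = 2 * (u ⬝ᵥ D *ᵥ n) := by
  have hcomm : n ⬝ᵥ D *ᵥ u = u ⬝ᵥ D *ᵥ n := by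
    rw [dotProduct_mulVec, ← mulVec_transpose, hD.eq, dotProduct_comm]
  rw [mul_add, trace_add, mul_vecMulVec, mul_vecMulVec, trace_vecMulVec, trace_vecMulVec,
    dotProduct_comm _ u, dotProduct_comm _ n, hcomm, two_mul]

open scoped Matrix.Norms.Elementwise

lemma isSymm_of_hasDerivAt {κ : Type*} [Finite κ] {A : ℝ → Matrix κ κ ℝ} {D : Matrix κ κ ℝ}
    {t₀ : ℝ} (hA : HasDerivAt A D t₀) (h₀ : (A t₀).IsSymm)
    (hsymm : ∃ᶠ t in 𝓝[≠] t₀, (A t).IsSymm) : D.IsSymm := by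
  have := Fintype.ofFinite κ
  have hclosed : IsClosed {M : Matrix κ κ ℝ | M.IsSymm} :=
    isClosed_eq continuous_id.matrix_transpose continuous_id
  exact hclosed.mem_of_frequently_of_tendsto
    (hsymm.mono fun t ht => (ht.sub h₀).smul _) hA.tendsto_slope

theorem statement17_general {A : ℝ → Matrix ι ι ℝ} {D : Matrix ι ι ℝ} {t₀ lam : ℝ}
    {n u w : ι → ℝ} (hA : HasDerivAt A D t₀)
    (hn : IsTopUnitEigenpair (A t₀) lam n)
    (hsimple : ∀ v, A t₀ *ᵥ v = lam • v → ∃ c : ℝ, v = c • n)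
    (hun : u ⬝ᵥ n = 0) (huw : lam • u - A t₀ *ᵥ u = w)
    (htop : ∃ᶠ t in 𝓝[≠] t₀, ∃ μ m, IsTopUnitEigenpair (A t) μ m ∧ m ⬝ᵥ w = 0) :
    (D * (vecMulVec n u + vecMulVec u n)).trace = 0 := by
  have hD : D.IsSymm :=
    isSymm_of_hasDerivAt hA hn.isSymm (htop.mono fun _ ⟨_, _, h, _⟩ => h.isSymm)
  rw [trace_mul_vecMulVec_add_vecMulVec hD]
  obtain ⟨f, hf, μ, m, v, hm, hmv, hv⟩ := exists_ultrafilter_tendsto_isTopUnitEigenpair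
    (hA.continuousAt.tendsto.mono_left nhdsWithin_le_nhds) htop
  have hslope : Tendsto (slope A t₀) f (𝓝 D) := hA.tendsto_slope.mono_left hf
  have hdot (x : ι → ℝ) : Tendsto (fun t => x ⬝ᵥ m t) f (𝓝 (x ⬝ᵥ v)) :=
    tendsto_dotProduct tendsto_const_nhds hmv
  have hform (x : ι → ℝ) : Tendsto (fun t => x ⬝ᵥ slope A t₀ t *ᵥ m t) f (𝓝 (x ⬝ᵥ D *ᵥ v)) :=
    tendsto_dotProduct tendsto_const_nhds (tendsto_mulVec hslope hmv)
  have hlim : (u ⬝ᵥ D *ᵥ v) * (n ⬝ᵥ v) = (n ⬝ᵥ D *ᵥ v) * (u ⬝ᵥ v) :=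
    tendsto_nhds_unique_of_eventuallyEq ((hform u).mul (hdot n)) ((hform n).mul (hdot u))
      (hm.mono fun t ht => dotProduct_smul_sub_mulVec_mul_comm _ hn.isSymm hn.mulVec_eq
        ht.1.mulVec_eq (huw ▸ ht.2))
  obtain ⟨c, rfl⟩ := hsimple v (hn.eigenvalue_unique hv ▸ hv.mulVec_eq)
  have hc : c * c = 1 := by
    simpa only [dotProduct_smul, smul_dotProduct, smul_eq_mul, hn.dotProduct_self, mul_one]
      using hv.dotProduct_self
  simp only [mulVec_smul, dotProduct_smul, smul_eq_mul, hn.dotProduct_self, hun] at hlim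
  linear_combination 2 * hlim - 2 * (u ⬝ᵥ D *ᵥ n) * hc

lemma hasDerivAt_toM {γ : ℝ → E9} {d : E9} {t₀ : ℝ} (hd : HasDerivAt γ d t₀) :
    HasDerivAt (fun t => toM (γ t)) (toM d) t₀ :=
  hasDerivAt_pi.2 fun i => hasDerivAt_pi.2 fun j =>
    (EuclideanSpace.proj (𝕜 := ℝ) (i, j)).hasFDerivAt.comp_hasDerivAt t₀ hd

end Perturbation

lemma unitVec_iff_dotProduct_self {n : Fin 3 → ℝ} : unitVec n ↔ n ⬝ᵥ n = 1 := by
  simp only [unitVec, dotProduct, sq]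

lemma exists_isTopUnitEigenpair_of_mem_TsetE {A : E9} (hA : A ∈ TsetE) :
    ∃ lam m, IsTopUnitEigenpair (toM A) lam m ∧ m 2 = 0 := by
  obtain ⟨⟨hsymm, -⟩, -, lam, m, ⟨⟨hunit, heigen, hmax⟩, -⟩, hm⟩ := hA
  exact ⟨lam, m, ⟨hsymm, unitVec_iff_dotProduct_self.1 hunit, heigen,
    dotProduct_mulVec_le_of_eigenvalues_le hsymm hmax⟩, hm⟩

section Uniaxial

lemma uniax_mulVec (s : ℝ) (n v : Fin 3 → ℝ) :
    uniax s n *ᵥ v = s • ((n ⬝ᵥ v) • n - (1 / 3 : ℝ) • v) := by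
  simp only [uniax, smul_mulVec, sub_mulVec, one_mulVec, vecMulVec_mulVec, op_smul_eq_smul]

variable {s : ℝ} {n : Fin 3 → ℝ}

lemma isTopUnitEigenpair_uniax (hs : 0 ≤ s) (hn : n ⬝ᵥ n = 1) :
    IsTopUnitEigenpair (uniax s n) (2 / 3 * s) n where
  isSymm := (IsSymm.sub (transpose_vecMulVec n n) (isSymm_one.smul _)).smul s
  dotProduct_self := hn
  mulVec_eq := by
    rw [uniax_mulVec, hn]
    module
  dotProduct_mulVec_le x := by
    have cauchy_schwarz : (n ⬝ᵥ x) ^ 2 ≤ x ⬝ᵥ x := by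
      have := Finset.sum_mul_sq_le_sq_mul_sq Finset.univ n x
      simp only [dotProduct, ← sq] at hn ⊢
      rwa [hn, one_mul] at this
    rw [uniax_mulVec]
    simp only [dotProduct_smul, dotProduct_sub, smul_eq_mul, dotProduct_comm x n]
    linear_combination s * cauchy_schwarz

lemma exists_eq_smul_of_uniax_mulVec_eq (hs : s ≠ 0) {v : Fin 3 → ℝ}
    (hv : uniax s n *ᵥ v = (2 / 3 * s) • v) : ∃ c : ℝ, v = c • n := by
  rw [uniax_mulVec] at hv
  refine ⟨n ⬝ᵥ v, smul_right_injective _ hs ?_⟩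
  linear_combination (norm := module) -hv

lemma smul_sub_uniax_mulVec_of_dotProduct_eq_zero {u : Fin 3 → ℝ} (hu : n ⬝ᵥ u = 0) :
    (2 / 3 * s) • u - uniax s n *ᵥ u = s • u := by
  rw [uniax_mulVec, hu]
  module

end Uniaxial

lemma trace_mul_eq_zero_of_frequently_mem_TsetE {s t₀ : ℝ} {n : Fin 3 → ℝ} {γ : ℝ → E9} {d : E9}
    (hs : 0 < s) (hn : n ⬝ᵥ n = 1) (hn₂ : n 2 = 0) (hγ : γ t₀ = toE (uniax s n))
    (hd : HasDerivAt γ d t₀) (hT : ∃ᶠ t in 𝓝[≠] t₀, γ t ∈ TsetE) :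
    (toM d * (vecMulVec n (Pi.single 2 1) + vecMulVec (Pi.single 2 1) n)).trace = 0 := by
  have hQ : toM (γ t₀) = uniax s n := hγ ▸ rfl
  have horth : n ⬝ᵥ Pi.single 2 1 = 0 := by rw [dotProduct_single_one, hn₂]
  have htop : ∃ᶠ t in 𝓝[≠] t₀, ∃ μ m,
      IsTopUnitEigenpair (toM (γ t)) μ m ∧ m ⬝ᵥ s • Pi.single 2 1 = 0 := by
    refine hT.mono fun t ht => ?_
    obtain ⟨μ, m, hm, hm₂⟩ := exists_isTopUnitEigenpair_of_mem_TsetE ht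
    exact ⟨μ, m, hm, by rw [dotProduct_smul, dotProduct_single_one, hm₂, smul_zero]⟩
  exact statement17_general (hasDerivAt_toM hd) (hQ ▸ isTopUnitEigenpair_uniax hs.le hn)
    (hQ ▸ fun _ => exists_eq_smul_of_uniax_mulVec_eq hs.ne') (dotProduct_comm n _ ▸ horth)
    (hQ ▸ smul_sub_uniax_mulVec_of_dotProduct_eq_zero horth) htop

lemma of_eq_vecMulVec_add_vecMulVec (n₁ n₂ : ℝ) :
    (!![0, 0, n₁; 0, 0, n₂; n₁, n₂, 0] : Mat3) =
      vecMulVec ![n₁, n₂, 0] (Pi.single 2 1) + vecMulVec (Pi.single 2 1) ![n₁, n₂, 0] := by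
  ext i j
  rw [Matrix.add_apply, vecMulVec_apply, vecMulVec_apply]
  fin_cases i <;> fin_cases j <;> simp

theorem statement17 (s n₁ n₂ : ℝ) (hs : 0 < s) (hn : n₁ ^ 2 + n₂ ^ 2 = 1)
    (γ : ℝ → E9) (d : E9) (hγ0 : γ 0 = toE (uniax s ![n₁, n₂, 0]))
    (hd : HasDerivAt γ d 0) (hγT : ∀ t ∈ Ioo (-1 : ℝ) 1, γ t ∈ TsetE) :
    ((toM d) * (s • !![0, 0, n₁; 0, 0, n₂; n₁, n₂, 0] : Mat3)).trace = 0 := by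
  have hunit : ![n₁, n₂, 0] ⬝ᵥ ![n₁, n₂, 0] = 1 := by
    simpa [dotProduct, Fin.sum_univ_three, ← sq] using hn
  have hT : ∀ᶠ t in 𝓝[≠] (0 : ℝ), γ t ∈ TsetE := nhdsWithin_le_nhds
    (mem_of_superset (Ioo_mem_nhds neg_one_lt_zero zero_lt_one) hγT)
  rw [of_eq_vecMulVec_add_vecMulVec, Matrix.mul_smul, trace_smul,
    trace_mul_eq_zero_of_frequently_mem_TsetE hs hunit rfl hγ0 hd hT.frequently, smul_zero]
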